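/- Let V : ℝ^d → ℝ be differentiable with L-Lipschitz gradient (L > 0), and suppose V is dissipative: ⟨∇V(x), x⟩ ≥ a‖x‖² − b for all x ∈ ℝ^d, with constants a, b > 0. Then V attains its infimum, and for every x ∈ ℝ^d, V(x) − inf_{y ∈ ℝ^d} V(y) ≤ 2L( ‖x‖² + b/a ). -/

import Mathlib

open MeasureTheory Real RealInnerProductSpace

/-!
Dissipativity makes the radial derivative of `V` nonnegative outside the ball of radius `√(b / a)`,
so `V` does not decrease along rays leaving that ball, and its minimum `x₀` over the compact ball is
a global minimum. There `∇V(x₀) = 0`, so dissipativity at `x₀` reads `a‖x₀‖² ≤ b`, while the descent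
lemma gives `V x - V x₀ ≤ (L / 2) ‖x - x₀‖² ≤ L (‖x‖² + ‖x₀‖²)`.
-/

section Dissipative

variable {E : Type*} [NormedAddCommGroup E] [InnerProductSpace ℝ E] {F : E → E} {a b : ℝ} {x : E}

/-- The vector field `F` is dissipative with constants `a` and `b`. A potential `V` is dissipative
when its gradient field is; no sign is imposed on the constants. -/
def IsDissipativeWith (F : E → E) (a b : ℝ) : Prop :=
  ∀ x, a * ‖x‖ ^ 2 - b ≤ ⟪F x, x⟫

namespace IsDissipativeWith

theorem inner_nonneg (hF : IsDissipativeWith F a b) (ha : 0 < a) (hx : √(b / a) ≤ ‖x‖) :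
    0 ≤ ⟪F x, x⟫ := by
  have hb : b ≤ ‖x‖ ^ 2 * a := (div_le_iff₀ ha).1 (Real.sqrt_le_iff.1 hx).2
  linarith [hF x]

theorem sq_norm_le_of_eq_zero (hF : IsDissipativeWith F a b) (ha : 0 < a) (hx : F x = 0) :
    ‖x‖ ^ 2 ≤ b / a := by
  have h := hF x
  rw [hx, inner_zero_left] at h
  rw [le_div_iff₀ ha]
  linarith

end IsDissipativeWith

end Dissipative

section Gradient

variable {E : Type*} [NormedAddCommGroup E] [InnerProductSpace ℝ E] {V : E → ℝ} {x : E}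

theorem hasDerivAt_comp_add_smul [CompleteSpace E] {h : E} {t : ℝ}
    (hV : DifferentiableAt ℝ V (x + t • h)) :
    HasDerivAt (fun s : ℝ => V (x + s • h)) ⟪gradient V (x + t • h), h⟫ t := by
  have hline : HasDerivAt (fun s : ℝ => x + s • h) h t := by
    simpa only [id_eq, one_smul] using ((hasDerivAt_id t).smul_const h).const_add x
  exact hV.hasGradientAt.hasFDerivAt.comp_hasDerivAt t hline

theorem gradient_eq_zero_of_isLocalMin [CompleteSpace E] (hx : IsLocalMin V x) :
    gradient V x = 0 := by
  rw [gradient, hx.fderiv_eq_zero, map_zero]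

theorem inner_gradient_add_smul_le [CompleteSpace E] {K : NNReal}
    (hK : LipschitzWith K (gradient V)) (x h : E) {t : ℝ} (ht : 0 ≤ t) :
    ⟪gradient V (x + t • h), h⟫ ≤ ⟪gradient V x, h⟫ + K * ‖h‖ ^ 2 * t := by
  have hnorm : ‖gradient V (x + t • h) - gradient V x‖ ≤ K * (t * ‖h‖) := by
    simpa only [add_sub_cancel_left, norm_smul, Real.norm_of_nonneg ht]
      using hK.norm_sub_le (x + t • h) x
  rw [← sub_le_iff_le_add', ← inner_sub_left]
  calc ⟪gradient V (x + t • h) - gradient V x, h⟫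
      ≤ ‖gradient V (x + t • h) - gradient V x‖ * ‖h‖ := real_inner_le_norm _ _
    _ ≤ K * (t * ‖h‖) * ‖h‖ := by gcongr
    _ = K * ‖h‖ ^ 2 * t := by ring

theorem le_add_inner_gradient_add_sq_norm [CompleteSpace E] {K : NNReal}
    (hV : Differentiable ℝ V) (hK : LipschitzWith K (gradient V)) (x h : E) :
    V (x + h) ≤ V x + ⟪gradient V x, h⟫ + K / 2 * ‖h‖ ^ 2 := by
  set p : ℝ → ℝ := fun t => V x + ⟪gradient V x, h⟫ * t + K * ‖h‖ ^ 2 * (t ^ 2 / 2) with hp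
  have hderivV (t : ℝ) := hasDerivAt_comp_add_smul (hV (x + t • h))
  have hderivp (t : ℝ) : HasDerivAt p (⟪gradient V x, h⟫ + K * ‖h‖ ^ 2 * t) t := by
    have hlin := ((hasDerivAt_id t).const_mul ⟪gradient V x, h⟫).const_add (V x)
    have hquad := ((hasDerivAt_pow 2 t).div_const 2).const_mul (K * ‖h‖ ^ 2 : ℝ)
    exact (hlin.add hquad).congr_deriv (by norm_num)
  have hle : V (x + (1 : ℝ) • h) ≤ p 1 :=
    image_le_of_deriv_right_le_deriv_boundary
      (fun t _ => (hderivV t).continuousAt.continuousWithinAt)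
      (fun t _ => (hderivV t).hasDerivWithinAt)
      (by simp [hp])
      (fun t _ => (hderivp t).continuousAt.continuousWithinAt)
      (fun t _ => (hderivp t).hasDerivWithinAt)
      (fun t ht => inner_gradient_add_smul_le hK x h ht.1)
      (Set.right_mem_Icc.2 zero_le_one)
  rw [one_smul] at hle
  exact hle.trans_eq (by simp only [hp]; ring)

theorem monotoneOn_comp_smul_of_inner_gradient_nonneg [CompleteSpace E] (hV : Differentiable ℝ V)
    {r : ℝ} (hr : 0 ≤ r) (h : ∀ t > r, 0 ≤ ⟪gradient V (t • x), t • x⟫) :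
    MonotoneOn (fun t : ℝ => V (t • x)) (Set.Ici r) := by
  have hderiv (t : ℝ) : HasDerivAt (fun t : ℝ => V (t • x)) ⟪gradient V (t • x), x⟫ t := by
    simpa only [zero_add] using hasDerivAt_comp_add_smul (x := 0) (h := x) (hV (0 + t • x))
  refine monotoneOn_of_hasDerivWithinAt_nonneg (convex_Ici r)
    (fun t _ => (hderiv t).continuousAt.continuousWithinAt)
    (fun t _ => (hderiv t).hasDerivWithinAt) fun t ht => ?_
  rw [interior_Ici, Set.mem_Ioi] at ht
  have htx := h t ht
  rw [real_inner_smul_right] at htx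
  exact nonneg_of_mul_nonneg_right htx (hr.trans_lt ht)

theorem exists_mem_closedBall_le_of_inner_gradient_nonneg [CompleteSpace E]
    (hV : Differentiable ℝ V) {R : ℝ} (hR : 0 ≤ R)
    (h : ∀ x, R ≤ ‖x‖ → 0 ≤ ⟪gradient V x, x⟫) (y : E) :
    ∃ z ∈ Metric.closedBall (0 : E) R, V z ≤ V y := by
  rcases le_or_gt ‖y‖ R with hy | hy
  · exact ⟨y, mem_closedBall_zero_iff.2 hy, le_rfl⟩
  have hy0 : 0 < ‖y‖ := hR.trans_lt hy
  have hr0 : 0 ≤ R / ‖y‖ := by positivity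
  have hr1 : R / ‖y‖ ≤ 1 := (div_le_one hy0).2 hy.le
  have hmono : MonotoneOn (fun t : ℝ => V (t • y)) (Set.Ici (R / ‖y‖)) := by
    refine monotoneOn_comp_smul_of_inner_gradient_nonneg hV hr0 fun t ht => h _ ?_
    rw [norm_smul, Real.norm_of_nonneg (hr0.trans ht.le)]
    exact (div_le_iff₀ hy0).1 ht.le
  refine ⟨(R / ‖y‖) • y, ?_, ?_⟩
  · rw [mem_closedBall_zero_iff, norm_smul, Real.norm_of_nonneg hr0, div_mul_cancel₀ R hy0.ne']
  · simpa only [one_smul] using hmono Set.self_mem_Ici hr1 hr1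

theorem exists_forall_le_of_inner_gradient_nonneg [ProperSpace E] (hV : Differentiable ℝ V)
    {R : ℝ} (hR : 0 ≤ R) (h : ∀ x, R ≤ ‖x‖ → 0 ≤ ⟪gradient V x, x⟫) :
    ∃ x₀, ∀ y, V x₀ ≤ V y := by
  obtain ⟨x₀, -, hmin⟩ := (isCompact_closedBall (0 : E) R).exists_isMinOn
    (Metric.nonempty_closedBall.2 hR) hV.continuous.continuousOn
  refine ⟨x₀, fun y => ?_⟩
  obtain ⟨z, hz, hzy⟩ := exists_mem_closedBall_le_of_inner_gradient_nonneg hV hR h y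
  exact (hmin hz).trans hzy

theorem sub_le_mul_sq_norm_add_sq_norm_of_gradient_eq_zero [CompleteSpace E] {K : NNReal}
    (hV : Differentiable ℝ V) (hK : LipschitzWith K (gradient V)) {x₀ : E}
    (hx₀ : gradient V x₀ = 0) (x : E) :
    V x - V x₀ ≤ K * (‖x‖ ^ 2 + ‖x₀‖ ^ 2) := by
  have hdescent := le_add_inner_gradient_add_sq_norm hV hK x₀ (x - x₀)
  rw [add_sub_cancel, hx₀, inner_zero_left, add_zero, ← sub_le_iff_le_add'] at hdescent
  calc V x - V x₀ ≤ K / 2 * ‖x - x₀‖ ^ 2 := hdescent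
    _ ≤ K / 2 * (‖x‖ + ‖x₀‖) ^ 2 := by gcongr; exact norm_sub_le x x₀
    _ ≤ K / 2 * (2 * (‖x‖ ^ 2 + ‖x₀‖ ^ 2)) := by gcongr; exact add_sq_le
    _ = K * (‖x‖ ^ 2 + ‖x₀‖ ^ 2) := by ring

theorem dissipative_lipschitz_potential_bound_general [ProperSpace E] {K : NNReal} {a b : ℝ}
    (ha : 0 < a) (hV : Differentiable ℝ V) (hK : LipschitzWith K (gradient V))
    (hdiss : IsDissipativeWith (gradient V) a b) :
    (∃ x₀, ∀ y, V x₀ ≤ V y) ∧ ∀ x, V x - (⨅ y, V y) ≤ K * (‖x‖ ^ 2 + b / a) := by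
  obtain ⟨x₀, hmin⟩ := exists_forall_le_of_inner_gradient_nonneg hV (Real.sqrt_nonneg (b / a))
    fun _ => hdiss.inner_nonneg ha
  have hcrit : gradient V x₀ = 0 := gradient_eq_zero_of_isLocalMin (.of_forall hmin)
  refine ⟨⟨x₀, hmin⟩, fun x => ?_⟩
  calc V x - ⨅ y, V y ≤ V x - V x₀ := by gcongr; exact le_ciInf hmin
    _ ≤ K * (‖x‖ ^ 2 + ‖x₀‖ ^ 2) :=
      sub_le_mul_sq_norm_add_sq_norm_of_gradient_eq_zero hV hK hcrit x
    _ ≤ K * (‖x‖ ^ 2 + b / a) := by gcongr; exact hdiss.sq_norm_le_of_eq_zero ha hcrit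

end Gradient

/-- A differentiable V : ℝ^d → ℝ with L-Lipschitz gradient (L > 0)
satisfying the dissipativity inequality ⟨∇V(x), x⟩ ≥ a‖x‖² − b (a, b > 0)
attains its infimum, and V(x) − inf V ≤ 2L(‖x‖² + b/a) for all x. -/
theorem dissipative_lipschitz_potential_bound
    (d : ℕ) (V : EuclideanSpace ℝ (Fin d) → ℝ) (L a b : ℝ)
    (hL : 0 < L) (ha : 0 < a) (hb : 0 < b)
    (hdiff : Differentiable ℝ V)
    (hlip : LipschitzWith L.toNNReal (fun x => gradient V x))
    (hdiss : ∀ x, a * ‖x‖ ^ 2 - b ≤ ⟪gradient V x, x⟫) :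
    (∃ x₀, ∀ y, V x₀ ≤ V y) ∧
    ∀ x, V x - (⨅ y, V y) ≤ 2 * L * (‖x‖ ^ 2 + b / a) := by
  have hsharp := dissipative_lipschitz_potential_bound_general ha hdiff hlip hdiss
  rw [Real.coe_toNNReal L hL.le] at hsharp
  exact hsharp.imp_right fun hbound x => (hbound x).trans (by gcongr; linarith)
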